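/- arXiv:1703.01069 — 8 statements merged into one kernel-verified Lean document; each statement's English description precedes it below -/
import Mathlib

section
/- Let a : ℕ × ℕ → ℤ be the double sequence determined by the recurrence a_{l+1,m+1} = a_{l,m} + a_{l+1,m} + a_{l,m+1} for all l,m ≥ 0, with boundary values a_{0,0} = 1 and a_{l,0} = a_{0,m} = 0 for all l,m ≥ 1. Then the limit as m → ∞ of (1/m) · log(a_{m,m}) exists and equals log(3 + 2·√2), where log denotes the natural logarithm on the reals. -/
open Filter

lemma dl_rec (l m n : ℕ) :
    (∑ k ∈ Finset.range (n+1), ((l+1).choose k : ℤ) * ((m+1).choose k) * 2^k)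
    = (∑ k ∈ Finset.range (n+1), (l.choose k : ℤ) * (m.choose k) * 2^k)
    + (∑ k ∈ Finset.range (n+1), ((l+1).choose k : ℤ) * (m.choose k) * 2^k)
    + (∑ k ∈ Finset.range (n+1), (l.choose k : ℤ) * ((m+1).choose k) * 2^k)
    - 2 * ((l.choose n : ℤ) * (m.choose n) * 2^n) := by
  induction n with
  | zero => simp
  | succ n ih =>
    rw [Finset.sum_range_succ, ih, Finset.sum_range_succ _ (n+1), Finset.sum_range_succ _ (n+1),
      Finset.sum_range_succ _ (n+1)]
    simp only [Nat.choose_succ_succ]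
    push_cast
    ring

lemma dl_one (n m : ℕ) :
    (∑ k ∈ Finset.range (n+1), ((0:ℕ).choose k : ℤ) * (m.choose k) * 2^k) = 1 := by
  rw [Finset.sum_range_succ']
  simp

lemma dl_one' (n m : ℕ) :
    (∑ k ∈ Finset.range (n+1), (m.choose k : ℤ) * ((0:ℕ).choose k) * 2^k) = 1 := by
  rw [Finset.sum_range_succ']
  simp

lemma dl_formula (a : ℕ × ℕ → ℤ)
    (hrec : ∀ l m : ℕ, a (l + 1, m + 1) = a (l, m) + a (l + 1, m) + a (l, m + 1))
    (h00 : a (0, 0) = 1)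
    (hl0 : ∀ l : ℕ, 1 ≤ l → a (l, 0) = 0)
    (h0m : ∀ m : ℕ, 1 ≤ m → a (0, m) = 0) (N l : ℕ) : l ≤ N → ∀ m : ℕ,
    a (l+1, m+1) = ∑ k ∈ Finset.range (N+1), (l.choose k : ℤ) * (m.choose k) * 2^k := by
  induction l with
  | zero =>
    intro _ m
    rw [dl_one]
    induction m with
    | zero => rw [hrec, h00, hl0 _ (by omega), h0m _ (by omega)]; norm_num
    | succ m ih => rw [hrec, ih, h0m _ (by omega), h0m _ (by omega)]; norm_num
  | succ l ihl =>
    intro hl m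
    induction m with
    | zero =>
      rw [hrec, ihl (by omega), hl0 _ (by omega), hl0 _ (by omega), dl_one', dl_one']; norm_num
    | succ m ih =>
      rw [hrec, ihl (by omega), ihl (by omega), ih, dl_rec, Nat.choose_eq_zero_of_lt (show l < N by omega)]
      simp

lemma dl_sq : (1 + Real.sqrt 2)^2 = 3 + 2 * Real.sqrt 2 := by
  have := Real.sq_sqrt (show (0:ℝ) ≤ 2 by norm_num)
  linarith [this, add_sq 1 (Real.sqrt 2)]

lemma dl_upper (a : ℕ × ℕ → ℤ)
    (hrec : ∀ l m : ℕ, a (l + 1, m + 1) = a (l, m) + a (l + 1, m) + a (l, m + 1))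
    (h00 : a (0, 0) = 1)
    (hl0 : ∀ l : ℕ, 1 ≤ l → a (l, 0) = 0)
    (h0m : ∀ m : ℕ, 1 ≤ m → a (0, m) = 0) (l : ℕ) : ∀ m : ℕ,
    (a (l, m) : ℝ) ≤ (1 + Real.sqrt 2)^(l+m) := by
  induction l with
  | zero =>
    intro m
    rcases m with _ | m
    · simp [h00]
    · rw [h0m _ (by omega)]; push_cast; positivity
  | succ l ihl =>
    intro m
    induction m with
    | zero => rw [hl0 _ (by omega)]; push_cast; positivity
    | succ m ih =>
      rw [hrec]
      push_cast
      have h1 := ihl m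
      have h2 := ihl (m+1)
      have e : (1 + Real.sqrt 2)^(l+1+(m+1)) = (1 + Real.sqrt 2)^(l+m)
          + (1 + Real.sqrt 2)^(l+1+m) + (1 + Real.sqrt 2)^(l+(m+1)) := by
        have h : (1 + Real.sqrt 2)^2 = 1 + (1 + Real.sqrt 2) + (1 + Real.sqrt 2) := by
          rw [dl_sq]; ring
        calc _ = (1 + Real.sqrt 2)^(l+m) * (1 + Real.sqrt 2)^2 := by ring
          _ = _ := by rw [h]; ring
      rw [e]
      linarith

lemma dl_lower (a : ℕ × ℕ → ℤ)
    (hrec : ∀ l m : ℕ, a (l + 1, m + 1) = a (l, m) + a (l + 1, m) + a (l, m + 1))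
    (h00 : a (0, 0) = 1)
    (hl0 : ∀ l : ℕ, 1 ≤ l → a (l, 0) = 0)
    (h0m : ∀ m : ℕ, 1 ≤ m → a (0, m) = 0) (n : ℕ) :
    (3 + 2 * Real.sqrt 2)^n ≤ (n+1) * (a (n+1, n+1) : ℝ) := by
  rw [dl_formula a hrec h00 hl0 h0m n n le_rfl n]
  have h := sq_sum_le_card_mul_sum_sq (s := Finset.range (n+1))
    (f := fun k => Real.sqrt 2 ^ k * 1 ^ (n-k) * (n.choose k : ℝ))
  rw [← add_pow] at h
  rw [← dl_sq, ← pow_mul, mul_comm 2 n, pow_mul, add_comm 1]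
  refine h.trans (le_of_eq ?_)
  simp only [Finset.card_range]
  push_cast
  congr 1
  refine Finset.sum_congr rfl fun k _ => ?_
  have h2 : (Real.sqrt 2 ^ k)^2 = 2^k := by
    rw [← pow_mul, mul_comm, pow_mul, Real.sq_sqrt (by norm_num)]
  rw [one_pow, mul_one, mul_pow, h2]
  ring

/-- For the double sequence with `a_{l+1,m+1} = a_{l,m} + a_{l+1,m} + a_{l,m+1}`,
`a_{0,0} = 1`, and `a_{l,0} = a_{0,m} = 0` for `l,m ≥ 1`, the limit as `m → ∞` of
`(1/m)·log a_{m,m}` exists and equals `log (3 + 2√2)`. -/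
theorem stmt4 (a : ℕ × ℕ → ℤ)
    (hrec : ∀ l m : ℕ, a (l + 1, m + 1) = a (l, m) + a (l + 1, m) + a (l, m + 1))
    (h00 : a (0, 0) = 1)
    (hl0 : ∀ l : ℕ, 1 ≤ l → a (l, 0) = 0)
    (h0m : ∀ m : ℕ, 1 ≤ m → a (0, m) = 0) :
    Tendsto (fun m : ℕ => (1 / (m : ℝ)) * Real.log ((a (m, m) : ℝ)))
      atTop (nhds (Real.log (3 + 2 * Real.sqrt 2))) := by
  have hU := dl_upper a hrec h00 hl0 h0m
  have hL := dl_lower a hrec h00 hl0 h0m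
  have hR : 0 < 3 + 2 * Real.sqrt 2 := by positivity
  have key : Tendsto (fun m : ℕ => Real.log (3 + 2 * Real.sqrt 2)
      - Real.log (3 + 2 * Real.sqrt 2) / (m:ℝ) - Real.log (m:ℝ) / (m:ℝ)) atTop
      (nhds (Real.log (3 + 2 * Real.sqrt 2))) := by
    have h1 : Tendsto (fun m : ℕ => Real.log (3 + 2 * Real.sqrt 2) / (m:ℝ)) atTop (nhds 0) :=
      tendsto_const_div_atTop_nhds_zero_nat _
    have h2 : Tendsto (fun m : ℕ => Real.log (m:ℝ) / (m:ℝ)) atTop (nhds 0) :=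
      (Real.isLittleO_log_id_atTop.tendsto_div_nhds_zero).comp tendsto_natCast_atTop_atTop
    simpa using (tendsto_const_nhds.sub h1).sub h2
  refine tendsto_of_tendsto_of_tendsto_of_le_of_le' key tendsto_const_nhds ?_ ?_
  · filter_upwards [eventually_ge_atTop 1] with m hm
    obtain ⟨n, rfl⟩ : ∃ n, m = n + 1 := ⟨m - 1, by omega⟩
    have h := hL n
    have hn : (0:ℝ) < (n:ℝ) + 1 := by positivity
    have hpos : (0:ℝ) < a (n+1, n+1) :=
      pos_of_mul_pos_right (lt_of_lt_of_le (pow_pos hR n) h) hn.le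
    have h3 := Real.log_le_log (pow_pos hR n) h
    rw [Real.log_pow, Real.log_mul hn.ne' hpos.ne'] at h3
    push_cast
    have : Real.log (3 + 2 * Real.sqrt 2) - Real.log (3 + 2 * Real.sqrt 2) / ((n:ℝ)+1)
      - Real.log ((n:ℝ)+1) / ((n:ℝ)+1) = 1 / ((n:ℝ)+1) *
        (n * Real.log (3 + 2 * Real.sqrt 2) - Real.log ((n:ℝ)+1)) := by
      field_simp
      ring
    rw [this]
    gcongr
    linarith
  · filter_upwards [eventually_ge_atTop 1] with m hm
    obtain ⟨n, rfl⟩ : ∃ n, m = n + 1 := ⟨m - 1, by omega⟩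
    have h := hL n
    have hn : (0:ℝ) < (n:ℝ) + 1 := by positivity
    have hpos : (0:ℝ) < a (n+1, n+1) :=
      pos_of_mul_pos_right (lt_of_lt_of_le (pow_pos hR n) h) hn.le
    have h3 := Real.log_le_log hpos (hU (n+1) (n+1))
    rw [← two_mul, pow_mul, dl_sq, Real.log_pow] at h3
    push_cast at h3 ⊢
    rw [one_div, inv_mul_le_iff₀ hn]
    exact h3
end

section
/- Let d̄ : ℕ × ℕ → ℤ satisfy the master degree equation d̄_{l+1,m+1} = d̄_{l+1,m} + d̄_{l,m+1} + d̄_{l-1,m-1} - d̄_{l,m-1} - d̄_{l-1,m} for all l,m ≥ 1, and define v_{l,m} := d̄_{l+1,m+1} - d̄_{l,m} for all l,m ≥ 0. Then v_{l,m} = v_{l,0} + v_{0,m} - v_{0,0} for all l,m ≥ 0. -/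
/-- If `d̄` satisfies the master degree equation
`d̄_{l+1,m+1} = d̄_{l+1,m} + d̄_{l,m+1} + d̄_{l-1,m-1} - d̄_{l,m-1} - d̄_{l-1,m}` for all
`l,m ≥ 1` (stated with indices shifted by one to stay in `ℕ`), and
`v_{l,m} := d̄_{l+1,m+1} - d̄_{l,m}`, then `v_{l,m} = v_{l,0} + v_{0,m} - v_{0,0}`
for all `l,m ≥ 0`. -/
theorem stmt6 (db : ℕ × ℕ → ℤ)
    (hrec : ∀ l m : ℕ, db (l + 2, m + 2) =
      db (l + 2, m + 1) + db (l + 1, m + 2) + db (l, m) - db (l + 1, m) - db (l, m + 1))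
    (v : ℕ × ℕ → ℤ)
    (hv : ∀ l m : ℕ, v (l, m) = db (l + 1, m + 1) - db (l, m)) :
    ∀ l m : ℕ, v (l, m) = v (l, 0) + v (0, m) - v (0, 0) := by
  have key : ∀ l m : ℕ, v (l + 1, m + 1) = v (l + 1, m) + v (l, m + 1) - v (l, m) := by
    intro l m
    have h := hrec l m
    have h1 := hv (l + 1) (m + 1)
    have h2 := hv (l + 1) m
    have h3 := hv l (m + 1)
    have h4 := hv l m
    simp only [add_assoc, Nat.reduceAdd] at *
    linarith
  intro l
  induction l with
  | zero => intro m; ring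
  | succ l ihl =>
    intro m
    induction m with
    | zero => ring
    | succ m ihm =>
      have h := key l m
      have h1 := ihl m
      have h2 := ihl (m + 1)
      linarith
end

section
/- Let d̄ : ℕ × ℕ → ℤ satisfy the master degree equation d̄_{l+1,m+1} = d̄_{l+1,m} + d̄_{l,m+1} + d̄_{l-1,m-1} - d̄_{l,m-1} - d̄_{l-1,m} for all l,m ≥ 1, and suppose d̄_{l,m} ≥ 1 for all l,m. Suppose there exist a real constant C > 0 and a natural number D such that |d̄_{1,m+1} - d̄_{0,m}| ≤ C·(m+1)^D for all m ≥ 0 and |d̄_{l+1,1} - d̄_{l,0}| ≤ C·(l+1)^D for all l ≥ 0. Then for each fixed m₀ ≥ 0 there is a constant C' > 0 such that d̄_{l, l+m₀} ≤ C'·(l+1)^{D+1} for all l ≥ 0, and consequently lim_{l→∞} log(d̄_{l, m₀+l})/l = 0. -/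
open Filter

/-- If `d̄ ≥ 1` satisfies the master degree equation
(for all `l,m ≥ 1`, stated with shifted indices), and the boundary degree differences
`d̄_{1,m+1} - d̄_{0,m}` and `d̄_{l+1,1} - d̄_{l,0}` are polynomially bounded of degree `D`,
then along each diagonal `d̄_{l,l+m₀}` is polynomially bounded of degree `D+1`, and
consequently `log(d̄_{l,m₀+l})/l → 0`. -/
theorem stmt7 (db : ℕ × ℕ → ℤ)
    (hrec : ∀ l m : ℕ, db (l + 2, m + 2) =
      db (l + 2, m + 1) + db (l + 1, m + 2) + db (l, m) - db (l + 1, m) - db (l, m + 1))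
    (hpos : ∀ l m : ℕ, 1 ≤ db (l, m))
    (C : ℝ) (hC : 0 < C) (D : ℕ)
    (hbound1 : ∀ m : ℕ, |(db (1, m + 1) : ℝ) - (db (0, m) : ℝ)| ≤ C * (m + 1) ^ D)
    (hbound2 : ∀ l : ℕ, |(db (l + 1, 1) : ℝ) - (db (l, 0) : ℝ)| ≤ C * (l + 1) ^ D)
    (m₀ : ℕ) :
    (∃ C' : ℝ, 0 < C' ∧ ∀ l : ℕ, (db (l, l + m₀) : ℝ) ≤ C' * (l + 1) ^ (D + 1)) ∧
      Tendsto (fun l : ℕ => Real.log ((db (l, m₀ + l) : ℝ)) / (l : ℝ)) atTop (nhds 0) := by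
  have he : ∀ l m : ℕ, (db (l + 1, m + 1) : ℝ) - db (l, m) =
      (db (l + 1, 1) - db (l, 0)) + (db (1, m + 1) - db (0, m)) - (db (1, 1) - db (0, 0)) := by
    intro l
    induction l with
    | zero => intro m; simp
    | succ l ihl =>
      intro m
      induction m with
      | zero => simp
      | succ m ihm =>
        have h := hrec l m
        have h' : (db (l + 2, m + 2) : ℝ) = db (l + 2, m + 1) + db (l + 1, m + 2) + db (l, m)
          - db (l + 1, m) - db (l, m + 1) := by exact_mod_cast h
        have h1 := ihl m
        have h2 := ihl (m + 1)
        simp only [add_assoc, Nat.reduceAdd] at *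
        linarith
  obtain ⟨K, hKdef⟩ : ∃ K : ℝ, K = 3 * C * ((m₀ : ℝ) + 1) ^ D := ⟨_, rfl⟩
  have hK : 0 < K := by rw [hKdef]; positivity
  have hstep : ∀ l : ℕ, (db (l + 1, l + 1 + m₀) : ℝ) ≤ db (l, l + m₀) + K * ((l : ℝ) + 1) ^ D := by
    intro l
    have h := he l (l + m₀)
    have h1 := (abs_le.mp (hbound1 (l + m₀))).2
    have h2 := (abs_le.mp (hbound2 l)).2
    have h3 := (abs_le.mp (hbound1 0)).1
    have hl : (0 : ℝ) ≤ l := Nat.cast_nonneg l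
    have hm : (0 : ℝ) ≤ m₀ := Nat.cast_nonneg m₀
    push_cast at h1 h3
    have e0 : ((m₀ : ℝ) + 1) ^ D * ((l : ℝ) + 1) ^ D = (((m₀ : ℝ) + 1) * ((l : ℝ) + 1)) ^ D :=
      (mul_pow _ _ _).symm
    have a1 : ((l : ℝ) + m₀ + 1) ^ D ≤ (((m₀ : ℝ) + 1) * ((l : ℝ) + 1)) ^ D := by
      apply pow_le_pow_left₀ (by positivity); nlinarith [mul_nonneg hm hl]
    have a2 : ((l : ℝ) + 1) ^ D ≤ (((m₀ : ℝ) + 1) * ((l : ℝ) + 1)) ^ D := by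
      apply pow_le_pow_left₀ (by positivity); nlinarith [mul_nonneg hm hl]
    have a3 : (1 : ℝ) ≤ (((m₀ : ℝ) + 1) * ((l : ℝ) + 1)) ^ D := by
      apply one_le_pow₀; nlinarith [mul_nonneg hm hl]
    have b1 := mul_le_mul_of_nonneg_left a1 hC.le
    have b2 := mul_le_mul_of_nonneg_left a2 hC.le
    have b3 := mul_le_mul_of_nonneg_left a3 hC.le
    have e1 : K * ((l : ℝ) + 1) ^ D = 3 * (C * (((m₀ : ℝ) + 1) * ((l : ℝ) + 1)) ^ D) := by
      rw [hKdef, ← e0]; ring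
    rw [e1]
    have e2 : l + 1 + m₀ = l + m₀ + 1 := by omega
    rw [e2]
    simp only [zero_add, one_pow, mul_one] at h3 b3
    linarith
  have hd0 : (1 : ℝ) ≤ db (0, m₀) := by exact_mod_cast hpos 0 m₀
  have hsum : ∀ l : ℕ, (db (l, l + m₀) : ℝ) ≤ db (0, m₀) + K * (l * ((l : ℝ) + 1) ^ D) := by
    intro l
    induction l with
    | zero => simp
    | succ l ih =>
      have h := hstep l
      have a : ((l : ℝ) + 1) ^ D ≤ ((l : ℝ) + 1 + 1) ^ D :=
        pow_le_pow_left₀ (by positivity) (by linarith) D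
      have b := mul_le_mul_of_nonneg_left a (by positivity : 0 ≤ K * ((l : ℝ) + 1))
      push_cast
      nlinarith
  have main : ∀ l : ℕ, (db (l, l + m₀) : ℝ) ≤ (db (0, m₀) + K) * ((l : ℝ) + 1) ^ (D + 1) := by
    intro l
    have hl : (0 : ℝ) ≤ l := Nat.cast_nonneg l
    have a : (1 : ℝ) ≤ ((l : ℝ) + 1) ^ (D + 1) := one_le_pow₀ (by linarith)
    have b : (l : ℝ) * ((l : ℝ) + 1) ^ D ≤ ((l : ℝ) + 1) ^ (D + 1) := by
      rw [pow_succ']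
      exact mul_le_mul_of_nonneg_right (by linarith) (by positivity)
    have c := mul_le_mul_of_nonneg_left b hK.le
    have c2 := mul_le_mul_of_nonneg_left a (zero_le_one.trans hd0)
    have := hsum l
    linarith
  refine ⟨⟨_, by linarith, main⟩, ?_⟩
  obtain ⟨A, hA⟩ : ∃ A : ℝ, A = (db (0, m₀) + K) * 2 ^ (D + 1) := ⟨_, rfl⟩
  have hApos : 0 < A := by rw [hA]; positivity
  have hlim : Tendsto (fun l : ℕ => Real.log A / (l : ℝ) + (D + 1 : ℝ) * (Real.log l / (l : ℝ)))
      atTop (nhds 0) := by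
    have h1 : Tendsto (fun l : ℕ => Real.log A / (l : ℝ)) atTop (nhds 0) :=
      tendsto_const_div_atTop_nhds_zero_nat _
    have h2 : Tendsto (fun l : ℕ => Real.log l / (l : ℝ)) atTop (nhds 0) :=
      (Real.isLittleO_log_id_atTop.tendsto_div_nhds_zero).comp tendsto_natCast_atTop_atTop
    simpa using h1.add (h2.const_mul (D + 1 : ℝ))
  refine tendsto_of_tendsto_of_tendsto_of_le_of_le' tendsto_const_nhds hlim ?_ ?_
  · refine Eventually.of_forall fun l => ?_
    have : (1 : ℝ) ≤ db (l, m₀ + l) := by exact_mod_cast hpos l (m₀ + l)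
    exact div_nonneg (Real.log_nonneg this) (Nat.cast_nonneg l)
  · filter_upwards [eventually_ge_atTop 1] with l hl
    have hl1 : (1 : ℝ) ≤ l := by exact_mod_cast hl
    have hl0 : (0 : ℝ) < l := by linarith
    have h1 : (1 : ℝ) ≤ db (l, m₀ + l) := by exact_mod_cast hpos l (m₀ + l)
    have h2 : (db (l, m₀ + l) : ℝ) ≤ A * (l : ℝ) ^ (D + 1) := by
      rw [add_comm m₀ l, hA, mul_assoc, ← mul_pow]
      refine (main l).trans (mul_le_mul_of_nonneg_left ?_ (by linarith))
      exact pow_le_pow_left₀ (by positivity) (by linarith) _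
    have h3 := Real.log_le_log (by linarith) h2
    rw [Real.log_mul hApos.ne' (by positivity), Real.log_pow] at h3
    push_cast at h3
    rw [← mul_div_assoc, ← add_div]
    exact div_le_div_of_nonneg_right h3 hl0.le
end

section
/- Let d̄ : ℕ × ℕ → ℤ satisfy the master degree equation d̄_{l+1,m+1} = d̄_{l+1,m} + d̄_{l,m+1} + d̄_{l-1,m-1} - d̄_{l,m-1} - d̄_{l-1,m} for all l,m ≥ 1, together with the Case I boundary values d̄_{0,0} = 1, d̄_{l,0} = d̄_{0,m} = 0 for all l,m ≥ 1, and d̄_{1,m} = d̄_{l,1} = 1 for all l,m ≥ 1. Then d̄_{l+1,m+1} = d̄_{l,m} + 2 for all l,m ≥ 1, and in particular d̄_{l,l} = 2l - 1 for all l ≥ 1, i.e. the reduced degree grows linearly along the diagonal. -/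
/-- If `d̄` satisfies the master degree equation (for `l,m ≥ 1`, stated
with shifted indices) with Case I boundary values `d̄_{0,0} = 1`,
`d̄_{l,0} = d̄_{0,m} = 0` for `l,m ≥ 1`, and `d̄_{1,m} = d̄_{l,1} = 1` for `l,m ≥ 1`,
then `d̄_{l+1,m+1} = d̄_{l,m} + 2` for all `l,m ≥ 1`, and in particular
`d̄_{l,l} = 2l - 1` for all `l ≥ 1`: linear growth along the diagonal. -/
theorem stmt8 (db : ℕ × ℕ → ℤ)
    (hrec : ∀ l m : ℕ, db (l + 2, m + 2) =
      db (l + 2, m + 1) + db (l + 1, m + 2) + db (l, m) - db (l + 1, m) - db (l, m + 1))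
    (h00 : db (0, 0) = 1)
    (hl0 : ∀ l : ℕ, 1 ≤ l → db (l, 0) = 0)
    (h0m : ∀ m : ℕ, 1 ≤ m → db (0, m) = 0)
    (h1m : ∀ m : ℕ, 1 ≤ m → db (1, m) = 1)
    (hl1 : ∀ l : ℕ, 1 ≤ l → db (l, 1) = 1) :
    (∀ l m : ℕ, 1 ≤ l → 1 ≤ m → db (l + 1, m + 1) = db (l, m) + 2) ∧
      (∀ l : ℕ, 1 ≤ l → db (l, l) = 2 * l - 1) := by
  have A : ∀ l : ℕ, db (l + 2, 2) = 3 := by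
    intro l
    induction l with
    | zero =>
      have := hrec 0 0
      simp only [zero_add] at this
      rw [this, hl1 2 (by omega), h1m 2 (by omega), h00, hl0 1 le_rfl, h0m 1 le_rfl]
      norm_num
    | succ l ih =>
      have := hrec (l + 1) 0
      simp only [zero_add] at this
      rw [this, hl1 _ (by omega), ih, hl0 (l + 1) (by omega), hl0 _ (by omega),
        hl1 _ (by omega)]
      norm_num
  have B : ∀ m : ℕ, db (2, m + 2) = 3 := by
    intro m
    induction m with
    | zero => exact A 0
    | succ m ih =>
      have := hrec 0 (m + 1)
      simp only [zero_add] at this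
      rw [this, h1m _ (by omega), ih, h0m (m + 1) (by omega), h0m _ (by omega),
        h1m _ (by omega)]
      norm_num
  have C : ∀ l m : ℕ, db (l + 2, m + 2) = db (l + 1, m + 1) + 2 := by
    intro l
    induction l with
    | zero =>
      intro m
      simp only [zero_add]
      rw [B, h1m _ (by omega)]
      norm_num
    | succ l ihl =>
      intro m
      induction m with
      | zero =>
        simp only [zero_add]
        rw [A, hl1 _ (by omega)]
        norm_num
      | succ m ihm =>
        have h1 := hrec (l + 1) (m + 1)
        have h2 := ihl m
        have h3 := ihl (m + 1)
        simp only [add_assoc, Nat.reduceAdd] at *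
        linarith
  refine ⟨?_, ?_⟩
  · intro l m hl hm
    obtain ⟨l, rfl⟩ := Nat.exists_eq_add_of_le' hl
    obtain ⟨m, rfl⟩ := Nat.exists_eq_add_of_le' hm
    exact C l m
  · intro l hl
    obtain ⟨l, rfl⟩ := Nat.exists_eq_add_of_le' hl
    induction l with
    | zero => simpa using h1m 1 le_rfl
    | succ l ih =>
      have h1 := C l l
      have h2 := ih (by omega)
      have e : l + 1 + 1 = l + 2 := rfl
      rw [e, h1, h2]
      push_cast
      ring
end

section
/- Let d̄ : ℕ × ℕ → ℤ satisfy the master degree equation d̄_{l+1,m+1} = d̄_{l+1,m} + d̄_{l,m+1} + d̄_{l-1,m-1} - d̄_{l,m-1} - d̄_{l-1,m} for all l,m ≥ 1, together with the Case II boundary values d̄_{l,0} = d̄_{0,m} = 1 for all l,m ≥ 0, d̄_{1,m} = 2m + 1 for all m ≥ 1, and d̄_{l,1} = 2l + 1 for all l ≥ 1. Then d̄_{l+1,m+1} - d̄_{l,m} = 2l + 2m + 2 for all l,m ≥ 0, and in particular d̄_{l,l} = 2l² + 1 for all l ≥ 0, i.e. the reduced degree grows quadratically along the diagonal with constant second difference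 4. -/
/-- If `d̄` satisfies the master degree equation (for `l,m ≥ 1`, stated
with shifted indices) with Case II boundary values `d̄_{l,0} = d̄_{0,m} = 1` for all
`l,m ≥ 0`, `d̄_{1,m} = 2m+1` for `m ≥ 1` and `d̄_{l,1} = 2l+1` for `l ≥ 1`, then
`d̄_{l+1,m+1} - d̄_{l,m} = 2l + 2m + 2` for all `l,m ≥ 0`, and in particular
`d̄_{l,l} = 2l² + 1` for all `l ≥ 0`: quadratic growth along the diagonal with
constant second difference `4`. -/
theorem stmt9 (db : ℕ × ℕ → ℤ)
    (hrec : ∀ l m : ℕ, db (l + 2, m + 2) =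
      db (l + 2, m + 1) + db (l + 1, m + 2) + db (l, m) - db (l + 1, m) - db (l, m + 1))
    (hl0 : ∀ l : ℕ, db (l, 0) = 1)
    (h0m : ∀ m : ℕ, db (0, m) = 1)
    (h1m : ∀ m : ℕ, 1 ≤ m → db (1, m) = 2 * m + 1)
    (hl1 : ∀ l : ℕ, 1 ≤ l → db (l, 1) = 2 * l + 1) :
    (∀ l m : ℕ, db (l + 1, m + 1) - db (l, m) = 2 * l + 2 * m + 2) ∧
      (∀ l : ℕ, db (l, l) = 2 * l ^ 2 + 1) := by
  have key : ∀ l m : ℕ, db (l + 1, m + 1) - db (l, m) = 2 * l + 2 * m + 2 := by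
    intro l
    induction l with
    | zero =>
      intro m
      have h1 := h1m (m + 1) (by omega)
      have h2 := h0m m
      simp only [Nat.zero_add]
      push_cast at h1 ⊢
      linarith
    | succ l ih =>
      intro m
      induction m with
      | zero =>
        have h1 := hl1 (l + 1 + 1) (by omega)
        have h2 := hl0 (l + 1)
        simp only [Nat.zero_add]
        push_cast at h1 ⊢
        linarith
      | succ m ihm =>
        have h1 := hrec l m
        have h2 := ih m
        have h3 := ih (m + 1)
        simp only [Nat.add_assoc, Nat.reduceAdd] at *
        push_cast at *
        linarith
  refine ⟨key, fun l => ?_⟩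
  induction l with
  | zero => simp [hl0]
  | succ l ih =>
    have h := key l l
    push_cast
    linarith
end

section
/- Let e : ℕ × ℕ → ℤ satisfy e_{l,m} = e_{l-1,m} + e_{l,m-1} + 1 for all l,m ≥ 1, with boundary values e_{l,0} = e_{0,m} = 1 for all l,m ≥ 0. Then e_{l,m} = 2·C(l+m, m) - 1 for all l,m ≥ 0, where C denotes the binomial coefficient. -/
/-- If `e` satisfies `e_{l,m} = e_{l-1,m} + e_{l,m-1} + 1` for all
`l,m ≥ 1` (stated with shifted indices) with boundary values `e_{l,0} = e_{0,m} = 1`,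
then `e_{l,m} = 2·C(l+m, m) - 1` for all `l,m ≥ 0`. -/
theorem stmt12 (e : ℕ × ℕ → ℤ)
    (hrec : ∀ l m : ℕ, e (l + 1, m + 1) = e (l, m + 1) + e (l + 1, m) + 1)
    (hl0 : ∀ l : ℕ, e (l, 0) = 1)
    (h0m : ∀ m : ℕ, e (0, m) = 1) :
    ∀ l m : ℕ, e (l, m) = 2 * ((l + m).choose m : ℤ) - 1 := by
  intro l
  induction l with
  | zero => intro m; simp [h0m]
  | succ l ihl =>
    intro m
    induction m with
    | zero => simp [hl0]
    | succ m ihm =>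
      have h : (l + 1 + (m + 1)).choose (m + 1)
          = (l + 1 + m).choose m + (l + (m + 1)).choose (m + 1) := by
        have h1 : l + 1 + (m + 1) = (l + 1 + m) + 1 := by omega
        have h2 : l + (m + 1) = l + 1 + m := by omega
        rw [h1, h2, Nat.choose_succ_succ]
      rw [hrec, ihl, ihm, h]
      push_cast
      ring
end

section
/- Let D be a function assigning a rational number D_{l,m} to each pair of positive integers (l,m), satisfying D_{l+1,m+1} = D_{l+1,m} + D_{l,m+1} for all l,m ≥ 1, with boundary values D_{1,m} = m + 2 for all m ≥ 1 and D_{l,1} = 2l + 1 for all l ≥ 1. Then D_{l,m} = ((2l + m)/(l + m)) · C(l+m, l) for all l,m ≥ 1, where C denotes the binomial coefficient. -/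
/-- If `D : ℕ × ℕ → ℚ` satisfies `D_{l+1,m+1} = D_{l+1,m} + D_{l,m+1}`
for all `l,m ≥ 1`, with boundary values `D_{1,m} = m + 2` for `m ≥ 1` and
`D_{l,1} = 2l + 1` for `l ≥ 1`, then `D_{l,m} = ((2l+m)/(l+m))·C(l+m,l)` for all
`l,m ≥ 1`. -/
theorem stmt14 (D : ℕ × ℕ → ℚ)
    (hrec : ∀ l m : ℕ, 1 ≤ l → 1 ≤ m → D (l + 1, m + 1) = D (l + 1, m) + D (l, m + 1))
    (h1m : ∀ m : ℕ, 1 ≤ m → D (1, m) = (m : ℚ) + 2)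
    (hl1 : ∀ l : ℕ, 1 ≤ l → D (l, 1) = 2 * (l : ℚ) + 1) :
    ∀ l m : ℕ, 1 ≤ l → 1 ≤ m →
      D (l, m) = ((2 * (l : ℚ) + m) / ((l : ℚ) + m)) * ((l + m).choose l : ℚ) := by
  have key : ∀ a b : ℕ, D (a + 1, b + 1) =
      ((a + b + 2).choose (a + 1) : ℚ) + ((a + b + 1).choose a : ℚ) := by
    intro a
    induction a with
    | zero =>
      intro b
      rw [h1m (b + 1) (by omega)]
      simp
      ring
    | succ a iha =>
      intro b
      induction b with
      | zero =>
        rw [hl1 (a + 1 + 1) (by omega)]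
        have e1 : (a + 1 + 0 + 2).choose (a + 1 + 1) = a + 3 :=
          Nat.choose_succ_self_right (a + 2)
        have e2 : (a + 1 + 0 + 1).choose (a + 1) = a + 2 :=
          Nat.choose_succ_self_right (a + 1)
        rw [e1, e2]
        push_cast
        ring
      | succ b ihb =>
        rw [hrec (a + 1) (b + 1) (by omega) (by omega), ihb, iha (b + 1)]
        have e1 : (a + 1 + (b + 1) + 2).choose (a + 1 + 1) =
            (a + b + 3).choose (a + 1) + (a + b + 3).choose (a + 2) := by
          rw [show a + 1 + (b + 1) + 2 = (a + b + 3) + 1 by ring]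
          exact Nat.choose_succ_succ _ _
        have e2 : (a + 1 + (b + 1) + 1).choose (a + 1) =
            (a + b + 2).choose a + (a + b + 2).choose (a + 1) := by
          rw [show a + 1 + (b + 1) + 1 = (a + b + 2) + 1 by ring]
          exact Nat.choose_succ_succ _ _
        rw [e1, e2, show a + 1 + b + 2 = a + b + 3 by ring,
          show a + 1 + b + 1 = a + b + 2 by ring, show a + (b + 1) + 2 = a + b + 3 by ring,
          show a + (b + 1) + 1 = a + b + 2 by ring]
        push_cast
        ring
  intro l m hl hm
  obtain ⟨a, rfl⟩ := Nat.exists_eq_add_of_le' hl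
  obtain ⟨b, rfl⟩ := Nat.exists_eq_add_of_le' hm
  rw [key a b, show a + 1 + (b + 1) = a + b + 2 by ring]
  have h : ((a : ℚ) + b + 2) * ((a + b + 1).choose a : ℚ) =
      ((a + b + 2).choose (a + 1) : ℚ) * (a + 1) := by
    have := Nat.add_one_mul_choose_eq (a + b + 1) a
    exact_mod_cast this
  have hne : ((a + 1 : ℕ) : ℚ) + ((b + 1 : ℕ) : ℚ) ≠ 0 := by positivity
  rw [div_mul_eq_mul_div, eq_div_iff hne]
  push_cast
  linear_combination h
end

section
/- Let p and q be coprime positive integers, and let d : ℕ → ℂ satisfy the linear recurrence d_{n+2(p+q)} = d_n + d_{n+p+2q} + d_{n+2p+q} − d_{n+q} − d_{n+p} for all n ≥ 0. Then there exist constants a, b, c ∈ ℂ and a function e : ℕ → ℂ that is periodic with period p·q·(p+q), such that d_n = a + b·n + c·n² + e_n for all n ≥ 0. -/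
open Polynomial in
lemma geom_coprime (p q : ℕ) (hp : 0 < p) (hpq : Nat.Coprime p q) :
    IsCoprime (∑ i ∈ Finset.range p, (X : ℂ[X]) ^ i) (∑ i ∈ Finset.range q, (X : ℂ[X]) ^ i) := by
  rw [Polynomial.isCoprime_iff_aeval_ne_zero_of_isAlgClosed ℂ ℂ]
  intro z
  by_contra! h
  obtain ⟨h1, h2⟩ := h
  simp only [map_sum, map_pow, aeval_X] at h1 h2
  have e1 : z ^ p = 1 := by
    have := geom_sum_mul z p
    rw [h1, zero_mul] at this
    exact (sub_eq_zero.mp this.symm)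
  have e2 : z ^ q = 1 := by
    have := geom_sum_mul z q
    rw [h2, zero_mul] at this
    exact (sub_eq_zero.mp this.symm)
  have e3 : z = 1 := by
    have := Nat.dvd_gcd (orderOf_dvd_of_pow_eq_one e1) (orderOf_dvd_of_pow_eq_one e2)
    rw [hpq] at this
    exact orderOf_eq_one_iff.mp (Nat.dvd_one.mp this)
  subst e3
  simp at h1
  omega

open Polynomial in
lemma geom_dvd (p N : ℕ) (h : p ∣ N) :
    (∑ i ∈ Finset.range p, (X : ℂ[X]) ^ i) ∣ (∑ i ∈ Finset.range N, (X : ℂ[X]) ^ i) := by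
  have hx : (X - 1 : ℂ[X]) ≠ 0 := by simpa using X_sub_C_ne_zero (1 : ℂ)
  rw [← mul_dvd_mul_iff_right hx, geom_sum_mul, geom_sum_mul]
  obtain ⟨k, rfl⟩ := h
  rw [pow_mul]
  simpa using sub_dvd_pow_sub_pow ((X : ℂ[X]) ^ p) 1 k

open Polynomial in
lemma char_dvd (p q : ℕ) (hp : 0 < p) (hq : 0 < q) (hpq : Nat.Coprime p q) :
    ((X : ℂ[X]) ^ p - 1) * (X ^ q - 1) * (X ^ (p + q) - 1) ∣
      (X ^ (p * q * (p + q)) - 1) * (X - 1) ^ 2 := by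
  have h1 := geom_coprime p q hp hpq
  have h2 := geom_coprime p (p + q) hp (by simpa using hpq)
  have h3 := geom_coprime q (p + q) hq (by simpa using hpq.symm)
  have h4 := (h2.mul_left h3).mul_dvd
    (h1.mul_dvd (geom_dvd p (p * q * (p + q)) ⟨q * (p + q), by ring⟩)
      (geom_dvd q (p * q * (p + q)) ⟨p * (p + q), by ring⟩))
    (geom_dvd (p + q) (p * q * (p + q)) ⟨p * q, by ring⟩)
  have h5 := mul_dvd_mul_right h4 ((X - 1 : ℂ[X]) ^ 3)
  rw [← geom_sum_mul, ← geom_sum_mul, ← geom_sum_mul, ← geom_sum_mul]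
  convert h5 using 1 <;> ring

/-- shift operator -/
def shiftOp : Module.End ℂ (ℕ → ℂ) where
  toFun f n := f (n + 1)
  map_add' _ _ := rfl
  map_smul' _ _ := rfl

lemma shiftOp_pow (k : ℕ) (f : ℕ → ℂ) (n : ℕ) : (shiftOp ^ k) f n = f (n + k) := by
  induction k generalizing n with
  | zero => simp
  | succ k ih =>
    rw [pow_succ', Module.End.mul_apply]
    change (shiftOp ^ k) f (n + 1) = _
    rw [ih]
    congr 1
    ring

/-- Let `p, q` be coprime positive integers and `d : ℕ → ℂ` satisfy
`d_{n+2(p+q)} = d_n + d_{n+p+2q} + d_{n+2p+q} − d_{n+q} − d_{n+p}` for all `n ≥ 0`.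
Then there are constants `a, b, c ∈ ℂ` and a `p·q·(p+q)`-periodic function
`e : ℕ → ℂ` with `d_n = a + b·n + c·n² + e_n` for all `n`. -/
theorem stmt17 (p q : ℕ) (hp : 0 < p) (hq : 0 < q) (hpq : Nat.Coprime p q)
    (d : ℕ → ℂ)
    (hrec : ∀ n : ℕ, d (n + 2 * (p + q)) =
      d n + d (n + p + 2 * q) + d (n + 2 * p + q) - d (n + q) - d (n + p)) :
    ∃ (a b c : ℂ) (e : ℕ → ℂ),
      (∀ n : ℕ, e (n + p * q * (p + q)) = e n) ∧
      ∀ n : ℕ, d n = a + b * (n : ℂ) + c * (n : ℂ) ^ 2 + e n := by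
  have key : ∀ n, d (n + 2 + p * q * (p + q)) - d (n + 2)
      - 2 * (d (n + 1 + p * q * (p + q)) - d (n + 1)) + (d (n + p * q * (p + q)) - d n) = 0 := by
    obtain ⟨R, hR⟩ := char_dvd p q hp hq hpq
    have h0 : Polynomial.aeval shiftOp (((Polynomial.X : Polynomial ℂ) ^ p - 1) *
        (Polynomial.X ^ q - 1) * (Polynomial.X ^ (p + q) - 1)) d = 0 := by
      have : ((Polynomial.X : Polynomial ℂ) ^ p - 1) *
        (Polynomial.X ^ q - 1) * (Polynomial.X ^ (p + q) - 1) =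
        Polynomial.X ^ (2 * (p + q)) - Polynomial.X ^ (p + 2 * q) - Polynomial.X ^ (2 * p + q)
          + Polynomial.X ^ q + Polynomial.X ^ p - 1 := by ring
      rw [this]
      ext n
      simp only [map_sub, map_add, map_pow, Polynomial.aeval_X, map_one, LinearMap.sub_apply,
        LinearMap.add_apply, Pi.sub_apply, Pi.add_apply, shiftOp_pow, Module.End.one_apply,
        Pi.zero_apply]
      rw [hrec n, ← add_assoc, ← add_assoc]
      ring
    have h1 : Polynomial.aeval shiftOp (((Polynomial.X : Polynomial ℂ) ^ (p * q * (p + q)) - 1)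
        * (Polynomial.X - 1) ^ 2) d = 0 := by
      rw [hR, mul_comm, map_mul, Module.End.mul_apply, h0, map_zero]
    intro n
    have h2 : ((Polynomial.X : Polynomial ℂ) ^ (p * q * (p + q)) - 1)
        * (Polynomial.X - 1) ^ 2 = Polynomial.X ^ (2 + p * q * (p + q)) - Polynomial.X ^ 2
        - (Polynomial.X ^ (1 + p * q * (p + q)) - Polynomial.X ^ 1)
        - (Polynomial.X ^ (1 + p * q * (p + q)) - Polynomial.X ^ 1)
        + (Polynomial.X ^ (p * q * (p + q)) - 1) := by ring
    rw [h2] at h1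
    have h3 := congrFun h1 n
    simp only [map_sub, map_add, map_pow, Polynomial.aeval_X, map_one, LinearMap.sub_apply,
        LinearMap.add_apply, Pi.sub_apply, Pi.add_apply, shiftOp_pow, Module.End.one_apply,
        Pi.zero_apply, ← add_assoc n] at h3
    linear_combination h3
  have hN : ((p * q * (p + q) : ℕ) : ℂ) ≠ 0 := by
    have : 0 < p * q * (p + q) := by positivity
    exact_mod_cast this.ne'
  generalize p * q * (p + q) = N at *
  obtain ⟨α, hα⟩ : ∃ α, α = d (0 + N) - d 0 := ⟨_, rfl⟩
  obtain ⟨β, hβ⟩ : ∃ β, β = d (1 + N) - d 1 - α := ⟨_, rfl⟩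
  have lin : ∀ n : ℕ, d (n + N) - d n = α + β * n ∧
      d (n + 1 + N) - d (n + 1) = α + β * ((n : ℂ) + 1) := by
    intro n
    induction n with
    | zero =>
      refine ⟨by rw [hα]; simp, ?_⟩
      simp only [zero_add, Nat.cast_zero]
      rw [hβ]; ring
    | succ n ih =>
      refine ⟨by rw [ih.2]; push_cast; ring, ?_⟩
      have := key n
      push_cast
      linear_combination this + 2 * ih.2 - ih.1
  refine ⟨0, (α - β / (2 * N) * N ^ 2) / N, β / (2 * N),
    fun n => d n - (α - β / (2 * N) * N ^ 2) / N * n - β / (2 * N) * (n : ℂ) ^ 2, ?_, ?_⟩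
  · intro n
    have h := (lin n).1
    have h' : d (n + N) = d n + (α + β * n) := by linear_combination h
    simp only [h']
    push_cast
    field_simp
    ring
  · intro n
    ring
end
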